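/- (Singular invariance) Let λ ∈ Λ_I⁺ and β ∈ Ψ_λ⁺, and write λ' = λ|_{Φ_{β,2}}. Then there exists μ ∈ Λ_I⁺ with sgn(s_βλ, μ) ≠ 0 if and only if there exists μ' ∈ Λ⁺(Φ_I ∩ Φ_{β,2}, Φ_{β,2}) with sgn(s_βλ', μ', Φ_I ∩ Φ_{β,2}, Φ_{β,2}) ≠ 0. In particular, if sgn(s_βλ, μ) ≠ 0, then, writing μ = w s_βλ with w ∈ W_I and μ' = w' s_βλ' with w' ∈ W(Φ_I ∩ Φ_{β,2}), one has c(λ,μ) = (−1)^{ℓ(w)+ℓ(w')} c(λ', μ', Φ_I ∩ Φ_{β,2}, Φ_{β,2}). -/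

import Mathlib

open scoped RealInnerProductSpace
open Classical

noncomputable section

namespace JantzenGVM

variable {V : Type*} [NormedAddCommGroup V] [InnerProductSpace ℝ V] [FiniteDimensional ℝ V]

/-- The coroot `α^∨ = 2α/⟨α,α⟩` of a vector `α` (junk value `0` when `α = 0`). -/
def coroot (α : V) : V := (2 / ⟪α, α⟫) • α

/-- The linear functional `v ↦ ⟨v, α^∨⟩`. -/
def corootForm (α : V) : V →ₗ[ℝ] ℝ where
  toFun v := ⟪v, coroot α⟫
  map_add' x y := by simp [inner_add_left]
  map_smul' c x := by simp [inner_smul_left]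

lemma corootForm_self {α : V} (h : ⟪α, α⟫ ≠ 0) : corootForm α α = 2 := by
  simp only [corootForm, coroot, LinearMap.coe_mk, AddHom.coe_mk, real_inner_smul_right]
  field_simp

/-- The reflection `s_α` as a linear automorphism of `V` (the identity when `⟨α,α⟩ = 0`). -/
def reflV (α : V) : V ≃ₗ[ℝ] V :=
  if h : ⟪α, α⟫ = 0 then LinearEquiv.refl ℝ V
  else Module.reflection (corootForm_self h)

/-- `h* = ℂ ⊗ V`, realized as the space of real-linear functionals `V → ℂ` via the
inner product; an element `λ` pairs with a root `α` by `⟨λ, α⟩ = λ α` and with the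
coroot by `⟨λ, α^∨⟩ = λ (coroot α)`. -/
abbrev HStar (V : Type*) [NormedAddCommGroup V] [InnerProductSpace ℝ V] := V →ₗ[ℝ] ℂ

/-- The canonical embedding of `V` into `h*`. -/
def emb (α : V) : HStar V where
  toFun v := (⟪α, v⟫ : ℂ)
  map_add' x y := by simp [inner_add_right]
  map_smul' c x := by simp [inner_smul_right, Complex.real_smul]

/-- The action of a linear automorphism `w` of `V` on `h*`: `(w • λ)(v) = λ(w⁻¹ v)`. -/
def wAct (w : V ≃ₗ[ℝ] V) (l : HStar V) : HStar V := l ∘ₗ (w.symm : V →ₗ[ℝ] V)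

/-- The reflection `s_β λ = λ - ⟨λ, β^∨⟩ β` acting on `h*`. -/
def sRefl (β : V) (l : HStar V) : HStar V := l - l (coroot β) • emb β

/-- The group generated by the reflections in the elements of `Φ'`. -/
def weyl (Φ' : Set V) : Subgroup (V ≃ₗ[ℝ] V) :=
  Subgroup.closure {w | ∃ α ∈ Φ', w = reflV α}

/-- A finite, reduced, crystallographic root system spanning the Euclidean space `V`,
together with a choice of positive system and the corresponding simple system. -/
structure RootSys (V : Type*) [NormedAddCommGroup V] [InnerProductSpace ℝ V]
    [FiniteDimensional ℝ V] where
  Φ : Finset V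
  pos : Finset V
  Δ : Finset V
  ne_zero : ∀ α ∈ Φ, α ≠ (0 : V)
  span_eq_top : Submodule.span ℝ (Φ : Set V) = ⊤
  reduced : ∀ α ∈ Φ, ∀ c : ℝ, c • α ∈ Φ → c = 1 ∨ c = -1
  refl_mem : ∀ α ∈ Φ, ∀ β ∈ Φ, reflV α β ∈ Φ
  crystallographic : ∀ α ∈ Φ, ∀ β ∈ Φ, ∃ n : ℤ, ⟪β, coroot α⟫ = (n : ℝ)
  pos_subset : pos ⊆ Φ
  mem_pos_or : ∀ α ∈ Φ, α ∈ pos ∨ -α ∈ pos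
  not_both : ∀ α ∈ pos, -α ∉ pos
  simple_subset : Δ ⊆ pos
  simple_indep : LinearIndependent ℝ (fun x : {a : V // a ∈ Δ} => x.1)
  simple_gen : ∀ β ∈ pos, ∃ c : V → ℝ, (∀ α ∈ Δ, 0 ≤ c α) ∧ β = ∑ α ∈ Δ, c α • α

/-- A subsystem of the root system: a subset of `Φ` closed under its own reflections. -/
def IsSubsystem (S : RootSys V) (Φ' : Set V) : Prop :=
  Φ' ⊆ (S.Φ : Set V) ∧ ∀ α ∈ Φ', ∀ β ∈ Φ', reflV α β ∈ Φ'

/-- The length of `w`, i.e. the number of positive roots sent to negative roots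
(this equals the Coxeter length for elements of the Weyl group). -/
def len (S : RootSys V) (w : V ≃ₗ[ℝ] V) : ℕ :=
  {β ∈ (S.pos : Set V) | w β ∉ (S.pos : Set V)}.ncard

/-- `Φ_I = ℤI ∩ Φ`, the subsystem generated by a subset `I` of the simple roots. -/
def PhiI (S : RootSys V) (I : Finset V) : Set V :=
  {α ∈ (S.Φ : Set V) | α ∈ Submodule.span ℤ (I : Set V)}

/-- `z` is a positive integer. -/
def IsPosInt (z : ℂ) : Prop := ∃ n : ℤ, 0 < n ∧ z = (n : ℂ)

/-- `z` is an integer. -/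
def IsInt (z : ℂ) : Prop := ∃ n : ℤ, z = (n : ℂ)

/-- `Λ_I⁺ = {λ ∈ h* : ⟨λ, α^∨⟩ ∈ ℤ_{>0} for all α ∈ I}`. -/
def LambdaP (I : Set V) : Set (HStar V) :=
  {l | ∀ α ∈ I, IsPosInt (l (coroot α))}

/-- `Λ⁺(Φ'', Φ') = {ν ∈ ℂΦ' : ⟨ν, α^∨⟩ ∈ ℤ_{>0} for all α ∈ Φ'' ∩ Φ⁺}`. -/
def LambdaPSub (S : RootSys V) (Φ'' Φ' : Set V) : Set (HStar V) :=
  {l | l ∈ Submodule.span ℂ (emb '' Φ') ∧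
       ∀ α ∈ Φ'' ∩ (S.pos : Set V), IsPosInt (l (coroot α))}

/-- `λ` is `Φ''`-regular: `⟨λ, α⟩ ≠ 0` for all `α ∈ Φ''`. -/
def IsRegularOn (Φ'' : Set V) (l : HStar V) : Prop := ∀ α ∈ Φ'', l α ≠ 0

/-- `Ψ⁺(λ, Φ'', Φ') = {β ∈ (Φ' ∩ Φ⁺) \ Φ'' : ⟨λ, β^∨⟩ ∈ ℤ_{>0}}`. -/
def PsiP (S : RootSys V) (Φ'' Φ' : Set V) (l : HStar V) : Set V :=
  {β | β ∈ Φ' ∩ (S.pos : Set V) ∧ β ∉ Φ'' ∧ IsPosInt (l (coroot β))}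

/-- `Ψ⁺⁺(λ, Φ'', Φ') = {β ∈ Ψ⁺(λ, Φ'', Φ') : s_β λ is Φ''-regular}`. -/
def PsiPP (S : RootSys V) (Φ'' Φ' : Set V) (l : HStar V) : Set V :=
  {β ∈ PsiP S Φ'' Φ' l | ∀ α ∈ Φ'', (sRefl β l) α ≠ 0}

/-- The sign function: `sgn(λ, μ) = (-1)^{ℓ(w)}` if `λ, μ` are `Φ''`-regular and
`μ = wλ` for some `w ∈ W(Φ'')`, and `0` otherwise. -/
def sgnW (S : RootSys V) (Φ'' : Set V) (l m : HStar V) : ℤ :=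
  if h : IsRegularOn Φ'' l ∧ IsRegularOn Φ'' m ∧ ∃ w, w ∈ weyl Φ'' ∧ m = wAct w l
  then (-1) ^ len S h.2.2.choose else 0

/-- The Jantzen coefficient `c(λ, μ, Φ'', Φ') = Σ_{β ∈ Ψ⁺⁺(λ,Φ'',Φ')} sgn(s_β λ, μ)`. -/
def jc (S : RootSys V) (Φ'' Φ' : Set V) (l m : HStar V) : ℤ :=
  ∑ᶠ β ∈ PsiPP S Φ'' Φ' l, sgnW S Φ'' (sRefl β l) m

/-- The symmetrized Jantzen coefficient `c̃(λ, μ, Φ'', Φ')`. -/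
def jcSym (S : RootSys V) (Φ'' Φ' : Set V) (l m : HStar V) : ℤ :=
  jc S Φ'' Φ' l m + jc S Φ'' Φ' m l

/-- `θ(λ) = Σ_{w ∈ W_I} (-1)^{ℓ(w)} e^{wλ}` in the free `ℤ`-module on `h*`. -/
def theta (S : RootSys V) (I : Finset V) (l : HStar V) : HStar V →₀ ℤ :=
  ∑ᶠ w ∈ (weyl (PhiI S I) : Set (V ≃ₗ[ℝ] V)),
    Finsupp.single (wAct w l) ((-1) ^ len S w)

/-- `Φ_λ = {α ∈ Φ : ⟨λ, α⟩ = 0}`. -/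
def singSet (S : RootSys V) (l : HStar V) : Set V :=
  {α ∈ (S.Φ : Set V) | l α = 0}

/-- `Φ_{[λ]} = {α ∈ Φ : ⟨λ, α^∨⟩ ∈ ℤ}`. -/
def integralSet (S : RootSys V) (l : HStar V) : Set V :=
  {α ∈ (S.Φ : Set V) | IsInt (l (coroot α))}

/-- `(ℚ A) ∩ Φ`, the intersection of the rational span of `A` with `Φ`.
Taking `A = Φ_I ∪ {β}` gives `Φ_{β,1}`; taking `A = Φ_λ ∪ {β}` gives `Φ_{β,2}`. -/
def ratSpanRoots (S : RootSys V) (A : Set V) : Set V :=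
  {γ ∈ (S.Φ : Set V) | ∃ (t : Finset V) (c : V → ℚ),
    (t : Set V) ⊆ A ∧ γ = ∑ α ∈ t, (c α : ℝ) • α}

/-- `Φ_{β,0}`, the irreducible component of `Φ` containing `β`. -/
def component (S : RootSys V) (β : V) : Set V :=
  {γ ∈ (S.Φ : Set V) |
    Relation.ReflTransGen
      (fun x y => x ∈ (S.Φ : Set V) ∧ y ∈ (S.Φ : Set V) ∧ ⟪x, y⟫ ≠ 0) β γ}

/-- `λ|_{Φ'}`: the unique element of `ℂΦ'` with `⟨λ|_{Φ'}, α^∨⟩ = ⟨λ, α^∨⟩`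
for all `α ∈ Φ'`. -/
def restrictW (Φ' : Set V) (l : HStar V) : HStar V :=
  letI : Nonempty (HStar V) := ⟨0⟩
  Classical.epsilon fun m =>
    m ∈ Submodule.span ℂ (emb '' Φ') ∧ ∀ α ∈ Φ', m (coroot α) = l (coroot α)

/-- `ᴵWᴶ = {w ∈ W : ℓ(uwv) = ℓ(u) + ℓ(w) + ℓ(v) for all u ∈ W_I, v ∈ W_J}`. -/
def doubleCoset (S : RootSys V) (I J : Finset V) : Set (V ≃ₗ[ℝ] V) :=
  {w | w ∈ weyl (S.Φ : Set V) ∧ ∀ u ∈ weyl (PhiI S I), ∀ v ∈ weyl (PhiI S J),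
    len S (u * w * v) = len S u + len S w + len S v}

/-- The fundamental weight `ϖ_j` relative to an enumeration `e` of the simple roots:
the unique element of `h*` with `⟨ϖ_j, α_k^∨⟩ = δ_{jk}`. -/
def fundWeight {n : ℕ} (e : Fin n → V) (j : Fin n) : HStar V :=
  letI : Nonempty (HStar V) := ⟨0⟩
  Classical.epsilon fun m => ∀ k : Fin n, m (coroot (e k)) = if k = j then 1 else 0

/-- The labels of the irreducible Dynkin types. -/
inductive LieType | A | B | C | D | E | F | G
deriving DecidableEq

/-- The Cartan matrix of type `A_n` (1-based indices): entry `(i,j)` is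
`⟨α_i, α_j^∨⟩`. -/
def cartanA (i j : ℕ) : ℤ :=
  if i = j then 2 else if i + 1 = j ∨ j + 1 = i then -1 else 0

/-- The Cartan matrices of the irreducible types in the standard (Bourbaki/Humphreys)
numbering of the Dynkin diagram: `cartanEntry t n i j = ⟨α_i, α_j^∨⟩` (1-based). -/
def cartanEntry : LieType → ℕ → ℕ → ℕ → ℤ
  | .A, _, i, j => cartanA i j
  | .B, n, i, j => if i + 1 = n ∧ j = n then -2 else cartanA i j
  | .C, n, i, j => if i = n ∧ j + 1 = n then -2 else cartanA i j
  | .D, n, i, j =>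
      if i = j then 2
      else if (i + 2 = n ∧ j = n) ∨ (i = n ∧ j + 2 = n) then -1
      else if (i + 1 = n ∧ j = n) ∨ (i = n ∧ j + 1 = n) then 0
      else cartanA i j
  | .E, _, i, j =>
      if i = j then 2
      else if (i = 1 ∧ j = 3) ∨ (i = 3 ∧ j = 1) ∨ (i = 2 ∧ j = 4) ∨ (i = 4 ∧ j = 2) then -1
      else if (i = 1 ∧ j = 2) ∨ (i = 2 ∧ j = 1) ∨ (i = 2 ∧ j = 3) ∨ (i = 3 ∧ j = 2) then 0
      else cartanA i j
  | .F, _, i, j => if i = 2 ∧ j = 3 then -2 else cartanA i j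
  | .G, _, i, j => if i = 2 ∧ j = 1 then -3 else cartanA i j

/-- The standard basis vector `e_k` (1-based index, junk `0` outside `1 ≤ k ≤ n`). -/
def stdE (n k : ℕ) : EuclideanSpace ℝ (Fin n) :=
  if h : 1 ≤ k ∧ k ≤ n then EuclideanSpace.single ⟨k - 1, by omega⟩ 1 else 0

/-- The labels `B`, `C`, `D` of the classical non-`A` types. -/
inductive BCD | B | C | D
deriving DecidableEq

/-- The root set of `B_n` / `C_n` / `D_n` in the standard realization. -/
def bcdRoots (t : BCD) (n : ℕ) : Set (EuclideanSpace ℝ (Fin n)) :=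
  {v | (∃ i j : ℕ, 1 ≤ i ∧ i < j ∧ j ≤ n ∧
          (v = stdE n i - stdE n j ∨ v = -(stdE n i - stdE n j) ∨
           v = stdE n i + stdE n j ∨ v = -(stdE n i + stdE n j))) ∨
       (match t with
        | .B => ∃ i : ℕ, 1 ≤ i ∧ i ≤ n ∧ (v = stdE n i ∨ v = -stdE n i)
        | .C => ∃ i : ℕ, 1 ≤ i ∧ i ≤ n ∧ (v = (2:ℝ) • stdE n i ∨ v = -((2:ℝ) • stdE n i))
        | .D => False)}

/-- The positive roots of `B_n` / `C_n` / `D_n` in the standard realization. -/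
def bcdPos (t : BCD) (n : ℕ) : Set (EuclideanSpace ℝ (Fin n)) :=
  {v | (∃ i j : ℕ, 1 ≤ i ∧ i < j ∧ j ≤ n ∧
          (v = stdE n i - stdE n j ∨ v = stdE n i + stdE n j)) ∨
       (match t with
        | .B => ∃ i : ℕ, 1 ≤ i ∧ i ≤ n ∧ v = stdE n i
        | .C => ∃ i : ℕ, 1 ≤ i ∧ i ≤ n ∧ v = (2:ℝ) • stdE n i
        | .D => False)}

/-- The simple roots of `B_n` / `C_n` / `D_n` in the standard realization. -/
def bcdSimple (t : BCD) (n : ℕ) : Set (EuclideanSpace ℝ (Fin n)) :=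
  {v | (∃ i : ℕ, 1 ≤ i ∧ i < n ∧ v = stdE n i - stdE n (i + 1)) ∨
       (match t with
        | .B => v = stdE n n
        | .C => v = (2:ℝ) • stdE n n
        | .D => v = stdE n (n - 1) + stdE n n)}

/-- The simple root `α_k` of `B_n` / `C_n` / `D_n` (1-based index `k`). -/
def bcdAlpha (t : BCD) (n k : ℕ) : EuclideanSpace ℝ (Fin n) :=
  if k < n then stdE n k - stdE n (k + 1)
  else match t with
  | .B => stdE n n
  | .C => (2:ℝ) • stdE n n
  | .D => stdE n (n - 1) + stdE n n


set_option linter.unusedSectionVars false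

/-! ### Basic facts on reflections -/

lemma reflV_apply (α v : V) : reflV α v = v - ⟪v, coroot α⟫ • α := by
  unfold reflV
  split_ifs with h
  · have : α = 0 := by simpa using h
    simp [this]
  · rw [Module.reflection_apply]
    rfl

lemma coroot_neg (α : V) : coroot (-α) = -coroot α := by simp [coroot]

lemma reflV_neg (α : V) : reflV (-α) = reflV α := by
  ext v; simp [reflV_apply, coroot_neg]

lemma inner_coroot_self {α : V} (h : α ≠ 0) : ⟪α, coroot α⟫ = 2 := by
  have : ⟪α, α⟫ ≠ 0 := by simpa using h
  exact corootForm_self this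

lemma reflV_self (α : V) : reflV α α = -α := by
  rw [reflV_apply]
  by_cases h : α = 0
  · simp [h]
  · rw [inner_coroot_self h]; module

lemma reflV_involutive (α v : V) : reflV α (reflV α v) = v := by
  rw [reflV_apply α v, map_sub, map_smul, reflV_self, reflV_apply]
  module

lemma reflV_mul_self (α : V) : reflV α * reflV α = 1 := by
  ext v; simp [reflV_involutive]

lemma reflV_inv (α : V) : (reflV α)⁻¹ = reflV α := by
  rw [inv_eq_iff_mul_eq_one]; exact reflV_mul_self α

lemma reflV_inner (α v w : V) : ⟪reflV α v, reflV α w⟫ = ⟪v, w⟫ := by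
  by_cases h : α = 0
  · simp [reflV_apply, h]
  have h' : ⟪α, α⟫ ≠ 0 := by simpa using h
  simp only [reflV_apply, coroot, inner_sub_left, inner_sub_right, real_inner_smul_left,
    real_inner_smul_right, real_inner_comm v α]
  rw [real_inner_comm w α]
  field_simp
  ring

lemma reflV_fix {α x : V} (h : ⟪x, α⟫ = 0) : reflV α x = x := by
  simp [reflV_apply, coroot, real_inner_smul_right, h]

lemma weyl_mono {A B : Set V} (h : A ⊆ B) : weyl A ≤ weyl B :=
  Subgroup.closure_mono (by rintro w ⟨α, ha, rfl⟩; exact ⟨α, h ha, rfl⟩)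

lemma reflV_mem_weyl {A : Set V} {α : V} (h : α ∈ A) : reflV α ∈ weyl A :=
  Subgroup.subset_closure ⟨α, h, rfl⟩

/-- Induction principle for the group generated by reflections. -/
lemma weyl_induction {A : Set V} {p : (w : V ≃ₗ[ℝ] V) → w ∈ weyl A → Prop} (h1 : p 1 (one_mem _))
    (hm : ∀ α, ∀ ha : α ∈ A, ∀ w, ∀ hw : w ∈ weyl A, p w hw →
      p (reflV α * w) (mul_mem (reflV_mem_weyl ha) hw)) {w : V ≃ₗ[ℝ] V}
    (hw : w ∈ weyl A) : p w hw := by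
  unfold weyl at hw
  induction hw using Subgroup.closure_induction_left with
  | one => exact h1
  | mul_left x hx y hy ih =>
    obtain ⟨α, ha, rfl⟩ := hx
    exact hm α ha y hy ih
  | inv_mul_cancel x hx y hy ih =>
    obtain ⟨α, ha, rfl⟩ := hx
    have := hm α ha y hy ih
    simp only [reflV_inv]
    exact this

lemma weyl_inner {A : Set V} {w : V ≃ₗ[ℝ] V} (hw : w ∈ weyl A) (x y : V) :
    ⟪w x, w y⟫ = ⟪x, y⟫ := by
  induction hw using weyl_induction with
  | h1 => rfl
  | hm α _ w _ ih => rw [LinearEquiv.mul_apply, LinearEquiv.mul_apply, reflV_inner, ih]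

lemma weyl_inv_inner {A : Set V} {w : V ≃ₗ[ℝ] V} (hw : w ∈ weyl A) (x y : V) :
    ⟪w⁻¹ x, y⟫ = ⟪x, w y⟫ := by
  rw [← weyl_inner hw (w⁻¹ x) y]
  congr 1
  exact w.apply_symm_apply x

/-- Elements of `weyl A` map any vector to itself modulo the span of `A`. -/
lemma weyl_sub_mem {A : Set V} (K : Submodule ℝ V) (hA : A ⊆ K) {w : V ≃ₗ[ℝ] V}
    (hw : w ∈ weyl A) (x : V) : w x - x ∈ K := by
  induction hw using weyl_induction with
  | h1 => simp
  | hm α ha w _ ih =>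
    rw [LinearEquiv.mul_apply, reflV_apply]
    have : w x - ⟪w x, coroot α⟫ • α - x = (w x - x) - ⟪w x, coroot α⟫ • α := by abel
    rw [this]
    exact K.sub_mem ih (K.smul_mem _ (hA ha))

lemma weyl_fix {A : Set V} {x : V} (hx : ∀ α ∈ A, ⟪x, α⟫ = 0) {w : V ≃ₗ[ℝ] V}
    (hw : w ∈ weyl A) : w x = x := by
  induction hw using weyl_induction with
  | h1 => simp
  | hm α ha w _ ih =>
    rw [LinearEquiv.mul_apply, ih, reflV_fix (hx α ha)]

lemma weyl_maps {A B : Set V} (h : ∀ α ∈ A, ∀ β ∈ B, reflV α β ∈ B) {w : V ≃ₗ[ℝ] V}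
    (hw : w ∈ weyl A) {β : V} (hβ : β ∈ B) : w β ∈ B := by
  induction hw using weyl_induction with
  | h1 => simpa
  | hm α ha w _ ih =>
    rw [LinearEquiv.mul_apply]; exact h α ha _ ih

lemma coroot_map {w : V ≃ₗ[ℝ] V} (hw : ∀ x y : V, ⟪w x, w y⟫ = ⟪x, y⟫) (α : V) :
    coroot (w α) = w (coroot α) := by
  simp only [coroot, hw, map_smul]

lemma reflV_conj {w : V ≃ₗ[ℝ] V} (hw : ∀ x y : V, ⟪w x, w y⟫ = ⟪x, y⟫) (α : V) :
    reflV (w α) = w * reflV α * w⁻¹ := by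
  ext v
  have h : w (w⁻¹ v) = v := w.apply_symm_apply v
  simp only [LinearEquiv.mul_apply, reflV_apply, map_sub, map_smul, h]
  rw [coroot_map hw, ← hw (w⁻¹ v), h]

lemma weyl_inv_apply (w : V ≃ₗ[ℝ] V) (x : V) : w⁻¹ (w x) = x := w.symm_apply_apply x
lemma weyl_apply_inv (w : V ≃ₗ[ℝ] V) (x : V) : w (w⁻¹ x) = x := w.apply_symm_apply x

/-! ### The action on `h*` -/

lemma wAct_apply (w : V ≃ₗ[ℝ] V) (l : HStar V) (v : V) : wAct w l v = l (w⁻¹ v) := rfl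

lemma wAct_mul (w u : V ≃ₗ[ℝ] V) (l : HStar V) : wAct (w * u) l = wAct w (wAct u l) := by
  ext v; simp [wAct_apply, mul_inv_rev]

lemma wAct_one (l : HStar V) : wAct 1 l = l := by
  ext v; simp [wAct_apply]

lemma wAct_inv_wAct (w : V ≃ₗ[ℝ] V) (l : HStar V) : wAct w⁻¹ (wAct w l) = l := by
  rw [← wAct_mul, inv_mul_cancel, wAct_one]

lemma sRefl_apply (β : V) (l : HStar V) (v : V) : sRefl β l v = l (reflV β v) := by
  rw [reflV_apply]
  simp only [sRefl, emb, coroot, LinearMap.sub_apply, LinearMap.smul_apply, map_sub, map_smul,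
    LinearMap.coe_mk, AddHom.coe_mk, smul_eq_mul, Complex.real_smul, real_inner_smul_right,
    real_inner_comm v β]
  push_cast
  ring

lemma sRefl_eq (β : V) (l : HStar V) : sRefl β l = wAct (reflV β) l := by
  ext v; rw [sRefl_apply, wAct_apply, reflV_inv]

/-! ### Root systems -/

lemma neg_mem (S : RootSys V) {α : V} (h : α ∈ S.Φ) : -α ∈ S.Φ := by
  have := S.refl_mem α h α h
  rwa [reflV_self] at this

lemma neg_pos_of_not {S : RootSys V} {α : V} (h : α ∈ S.Φ) (h' : α ∉ S.pos) : -α ∈ S.pos :=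
  (S.mem_pos_or α h).resolve_left h'

lemma weyl_Phi {S : RootSys V} {w : V ≃ₗ[ℝ] V} (hw : w ∈ weyl (S.Φ : Set V)) {α : V}
    (h : α ∈ S.Φ) : w α ∈ S.Φ :=
  weyl_maps (B := (S.Φ : Set V)) (fun α ha β hb => S.refl_mem α ha β hb) hw h

lemma simple_span (S : RootSys V) :
    ⊤ ≤ Submodule.span ℝ (Set.range (fun x : {a : V // a ∈ S.Δ} => x.1)) := by
  rw [← S.span_eq_top, Submodule.span_le]
  have key : ∀ β ∈ S.pos, β ∈ Submodule.span ℝ (Set.range (fun x : {a : V // a ∈ S.Δ} => x.1)) := by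
    intro β hβ
    obtain ⟨c, -, hc⟩ := S.simple_gen β hβ
    rw [hc]
    exact Submodule.sum_mem _ fun a ha => Submodule.smul_mem _ _
      (Submodule.subset_span ⟨⟨a, ha⟩, rfl⟩)
  intro β hβ
  by_cases h : β ∈ S.pos
  · exact key β h
  · have := key _ (neg_pos_of_not hβ h)
    simpa using Submodule.neg_mem _ this

/-- The basis of simple roots. -/
def sBasis (S : RootSys V) : Module.Basis {a : V // a ∈ S.Δ} ℝ V :=
  Module.Basis.mk S.simple_indep (simple_span S)

lemma sBasis_apply (S : RootSys V) (a : {a : V // a ∈ S.Δ}) : sBasis S a = a.1 := by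
  simp [sBasis]

/-- Coordinate with respect to a simple root. -/
def crd (S : RootSys V) (a : {a : V // a ∈ S.Δ}) : V →ₗ[ℝ] ℝ := (sBasis S).coord a

lemma crd_simple (S : RootSys V) (a b : {a : V // a ∈ S.Δ}) :
    crd S a b.1 = if a = b then 1 else 0 := by
  rw [← sBasis_apply S b, crd, Module.Basis.coord_apply, Module.Basis.repr_self,
    Finsupp.single_apply]
  simp only [eq_comm]

lemma crd_sum (S : RootSys V) (v : V) : ∑ a, crd S a v • a.1 = v := by
  conv_rhs => rw [← (sBasis S).sum_repr v]
  simp [crd, sBasis_apply]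

lemma crd_nonneg {S : RootSys V} {β : V} (h : β ∈ S.pos) (a : {a : V // a ∈ S.Δ}) :
    0 ≤ crd S a β := by
  obtain ⟨c, hc, hb⟩ := S.simple_gen β h
  rw [hb, map_sum]
  apply Finset.sum_nonneg
  intro x hx
  rw [map_smul, crd_simple S a ⟨x, hx⟩]
  split_ifs <;> simp [hc x hx]

lemma pos_of_crd {S : RootSys V} {β : V} (h : β ∈ S.Φ) (a : {a : V // a ∈ S.Δ})
    (ha : 0 < crd S a β) : β ∈ S.pos := by
  by_contra hn
  have := crd_nonneg (neg_pos_of_not h hn) a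
  rw [map_neg] at this
  linarith

lemma simple_mem_Phi {S : RootSys V} {a : V} (h : a ∈ S.Δ) : a ∈ S.Φ :=
  S.pos_subset (S.simple_subset h)

/-- A simple reflection permutes the positive roots other than the simple root itself. -/
lemma simple_refl_pos {S : RootSys V} {a b : V} (ha : a ∈ S.Δ) (hb : b ∈ S.pos) (hne : b ≠ a) :
    reflV a b ∈ S.pos := by
  have hm := S.refl_mem a (simple_mem_Phi ha) b (S.pos_subset hb)
  by_cases hx : ∃ x : {a : V // a ∈ S.Δ}, x.1 ≠ a ∧ 0 < crd S x b
  · obtain ⟨x, hxa, hx⟩ := hx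
    apply pos_of_crd hm x
    rw [reflV_apply, map_sub, map_smul, crd_simple S x ⟨a, ha⟩, if_neg]
    · simpa
    · rintro rfl; exact hxa rfl
  · push Not at hx
    exfalso
    have hb' : b = crd S ⟨a, ha⟩ b • a := by
      conv_lhs => rw [← crd_sum S b]
      rw [Finset.sum_eq_single ⟨a, ha⟩]
      · rintro x - hxa
        have : crd S x b = 0 :=
          le_antisymm (hx x (fun h => hxa (Subtype.ext h))) (crd_nonneg hb x)
        simp [this]
      · simp
    have h1 := S.reduced a (simple_mem_Phi ha) (crd S ⟨a, ha⟩ b) (hb' ▸ S.pos_subset hb)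
    have h2 := crd_nonneg hb ⟨a, ha⟩
    rcases h1 with h1 | h1
    · rw [h1, one_smul] at hb'; exact hne hb'
    · rw [h1] at h2; norm_num at h2

/-- Height functional. -/
def ht (S : RootSys V) : V →ₗ[ℝ] ℝ := ∑ a, crd S a

lemma ht_simple {S : RootSys V} {a : V} (ha : a ∈ S.Δ) : ht S a = 1 := by
  simp [ht, crd_simple S _ ⟨a, ha⟩]

lemma ht_pos {S : RootSys V} {β : V} (h : β ∈ S.pos) : 0 < ht S β := by
  have h0 : 0 ≤ ht S β := by
    rw [ht, LinearMap.sum_apply]; exact Finset.sum_nonneg fun a _ => crd_nonneg h a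
  rcases h0.lt_or_eq with h1 | h1
  · exact h1
  · exfalso
    rw [ht, LinearMap.sum_apply] at h1
    have := (Finset.sum_eq_zero_iff_of_nonneg (fun a _ => crd_nonneg h a)).1 h1.symm
    apply S.ne_zero β (S.pos_subset h)
    rw [← crd_sum S β]
    exact Finset.sum_eq_zero fun a ha => by rw [this a ha, zero_smul]

/-- Vectors with pairing the height functional. -/
lemma exists_delta (S : RootSys V) : ∃ δ : V, ∀ α ∈ S.pos, 0 < ⟪α, δ⟫ := by
  refine ⟨(InnerProductSpace.toDual ℝ V).symm (LinearMap.toContinuousLinearMap (ht S)), ?_⟩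
  intro α ha
  rw [real_inner_comm, InnerProductSpace.toDual_symm_apply]
  exact ht_pos ha

/-- Induction over positive roots in the real span of a set of simple roots. -/
lemma pos_induction (S : RootSys V) (J : Set V) (hJ : J ⊆ (S.Δ : Set V)) (p : V → Prop)
    (h0 : ∀ a ∈ J, p a)
    (h1 : ∀ a ∈ J, ∀ b ∈ S.pos, b ∈ Submodule.span ℝ J → p b → p (reflV a b)) :
    ∀ b ∈ S.pos, b ∈ Submodule.span ℝ J → p b := by
  have main : ∀ n : ℕ, ∀ b ∈ S.pos, b ∈ Submodule.span ℝ J →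
      (S.pos.filter (fun c => ht S c < ht S b)).card = n → p b := by
    intro n
    induction n using Nat.strong_induction_on with
    | _ n ih =>
    intro b hb hbJ hn
    have hsupp : ∀ x : {a : V // a ∈ S.Δ}, x.1 ∉ J → crd S x b = 0 := by
      intro x hx
      have : Submodule.span ℝ J ≤ LinearMap.ker (crd S x) := by
        rw [Submodule.span_le]
        intro y hy
        rw [SetLike.mem_coe, LinearMap.mem_ker, crd_simple S x ⟨y, hJ hy⟩, if_neg]
        rintro rfl; exact hx hy
      exact this hbJ
    have hbb : 0 < ⟪b, b⟫ := real_inner_self_pos.2 (S.ne_zero b (S.pos_subset hb))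
    have hex : ∃ x : {a : V // a ∈ S.Δ}, 0 < crd S x b * ⟪b, x.1⟫ := by
      by_contra hcon
      push Not at hcon
      have : ⟪b, b⟫ = ∑ x, crd S x b * ⟪b, x.1⟫ := by
        conv_lhs => rw [← crd_sum S b, sum_inner]
        rw [crd_sum S b]
        exact Finset.sum_congr rfl fun x _ => by rw [real_inner_smul_left, real_inner_comm]
      have h2 : ∑ x, crd S x b * ⟪b, x.1⟫ ≤ 0 := Finset.sum_nonpos fun x _ => hcon x
      linarith
    obtain ⟨a, ha⟩ := hex
    have haJ : a.1 ∈ J := by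
      by_contra hx
      rw [hsupp a hx] at ha; simp at ha
    have hba : 0 < ⟪b, a.1⟫ := by
      have := crd_nonneg hb a
      by_contra hh
      push Not at hh
      nlinarith
    by_cases hne : b = a.1
    · rw [hne]; exact h0 _ haJ
    have hpos := simple_refl_pos a.2 hb hne
    have haa : 0 < ⟪a.1, a.1⟫ := real_inner_self_pos.2 (S.ne_zero _ (simple_mem_Phi a.2))
    have hlt : ht S (reflV a.1 b) < ht S b := by
      rw [reflV_apply, map_sub, map_smul, ht_simple a.2, coroot, real_inner_smul_right]
      have : 0 < 2 / ⟪a.1, a.1⟫ * ⟪b, a.1⟫ := by positivity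
      simp only [smul_eq_mul]
      linarith
    have hspan : reflV a.1 b ∈ Submodule.span ℝ J := by
      rw [reflV_apply]
      exact Submodule.sub_mem _ hbJ (Submodule.smul_mem _ _ (Submodule.subset_span haJ))
    have := ih _ (by
      rw [← hn]
      apply Finset.card_lt_card
      rw [Finset.ssubset_iff_of_subset]
      · exact ⟨reflV a.1 b, by simp [hpos, hlt], by simp⟩
      · intro c
        simp only [Finset.mem_filter]
        exact fun h => ⟨h.1, h.2.trans hlt⟩) _ hpos hspan rfl
    have h3 := h1 a.1 haJ _ hpos hspan this
    rwa [reflV_involutive] at h3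
  exact fun b hb hbJ => main _ b hb hbJ rfl

lemma weyl_simple (S : RootSys V) : weyl (S.Φ : Set V) ≤ weyl (S.Δ : Set V) := by
  have key : ∀ b ∈ S.pos, b ∈ Submodule.span ℝ (S.Δ : Set V) → reflV b ∈ weyl (S.Δ : Set V) := by
    apply pos_induction S _ subset_rfl
    · exact fun a ha => reflV_mem_weyl ha
    · intro a ha b _ _ h
      rw [reflV_conj (reflV_inner a)]
      exact mul_mem (mul_mem (reflV_mem_weyl ha) h) (inv_mem (reflV_mem_weyl ha))
  have htop : ∀ b, b ∈ Submodule.span ℝ (S.Δ : Set V) := by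
    intro b
    have := simple_span S (Submodule.mem_top (x := b))
    simpa using this
  unfold weyl
  rw [Subgroup.closure_le]
  rintro _ ⟨α, ha, rfl⟩
  by_cases h : α ∈ S.pos
  · exact key α h (htop _)
  · rw [← reflV_neg]; exact key _ (neg_pos_of_not ha h) (htop _)

/-! ### Stabilizers -/

/-- The product of the reflections in a list of vectors. -/
def lp (L : List V) : V ≃ₗ[ℝ] V := (L.map reflV).prod

lemma lp_cons (a : V) (L : List V) : lp (a :: L) = reflV a * lp L := by simp [lp]

lemma lp_mem {S : RootSys V} (L : List V) (h : ∀ a ∈ L, a ∈ S.Δ) :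
    lp L ∈ weyl (S.Φ : Set V) := by
  induction L with
  | nil => exact one_mem _
  | cons a L ih =>
    rw [lp_cons]
    exact mul_mem (reflV_mem_weyl (simple_mem_Phi (h a (by simp))))
      (ih fun b hb => h b (by simp [hb]))

lemma exists_list {S : RootSys V} {w : V ≃ₗ[ℝ] V} (hw : w ∈ weyl (S.Φ : Set V)) :
    ∃ L : List V, (∀ a ∈ L, a ∈ S.Δ) ∧ w = lp L := by
  have hw' := weyl_simple S hw
  induction hw' using weyl_induction with
  | h1 => exact ⟨[], by simp, by simp [lp]⟩
  | hm α ha w hw'' ih =>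
    obtain ⟨L, hL, rfl⟩ := ih (weyl_mono (fun a ha => simple_mem_Phi ha) hw'')
    refine ⟨α :: L, ?_, (lp_cons _ _).symm⟩
    intro b hb
    rcases List.mem_cons.1 hb with rfl | hb
    · exact ha
    · exact hL b hb

/-- Exchange condition. -/
lemma exchange {S : RootSys V} {a : V} (ha : a ∈ S.Δ) (L : List V) (h : ∀ a ∈ L, a ∈ S.Δ)
    (hneg : lp L a ∉ S.pos) :
    ∃ L' : List V, (∀ a ∈ L', a ∈ S.Δ) ∧ L'.length < L.length ∧ lp L * reflV a = lp L' := by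
  induction L with
  | nil => exact absurd (S.simple_subset ha) (by simpa [lp] using hneg)
  | cons b L ih =>
    have hL : ∀ a ∈ L, a ∈ S.Δ := fun c hc => h c (by simp [hc])
    have hb : b ∈ S.Δ := h b (by simp)
    by_cases hp : lp L a ∈ S.pos
    · have hab : lp L a = b := by
        by_contra hne
        apply hneg
        rw [lp_cons]
        exact simple_refl_pos hb hp hne
      refine ⟨L, hL, by simp, ?_⟩
      have := reflV_conj (weyl_inner (lp_mem L hL)) a
      rw [hab] at this
      rw [lp_cons, this]
      calc lp L * reflV a * (lp L)⁻¹ * lp L * reflV a = lp L * (reflV a * reflV a) := by group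
        _ = lp L := by rw [reflV_mul_self, mul_one]
    · obtain ⟨L', hL', hlen, he⟩ := ih hL hp
      refine ⟨b :: L', ?_, by simpa using hlen, ?_⟩
      · intro c hc
        rcases List.mem_cons.1 hc with rfl | hc
        · exact hb
        · exact hL' c hc
      · rw [lp_cons, lp_cons, mul_assoc, he]

lemma stab_dominant_aux {S : RootSys V} {x : V} (hx : ∀ a ∈ S.pos, 0 ≤ ⟪x, a⟫) :
    ∀ n : ℕ, ∀ L : List V, L.length = n → (∀ a ∈ L, a ∈ S.Δ) → lp L x = x →
      lp L ∈ weyl {α ∈ (S.Φ : Set V) | ⟪x, α⟫ = 0} := by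
  intro n
  induction n using Nat.strong_induction_on with
  | _ n ih =>
  intro L hn hL hfix
  rcases L.eq_nil_or_concat with rfl | ⟨L, a, rfl⟩
  · exact one_mem _
  have ha : a ∈ S.Δ := hL a (by simp)
  have hL' : ∀ a ∈ L, a ∈ S.Δ := fun c hc => hL c (by simp [hc])
  have hlp : lp (L.concat a) = lp L * reflV a := by simp [lp]
  have hlen : L.length < n := by rw [← hn]; simp
  by_cases hp : lp L a ∈ S.pos
  · have h1 : ⟪x, a⟫ = - ⟪x, lp L a⟫ := by
      rw [← weyl_inner (lp_mem _ hL) x a, hfix, hlp, LinearEquiv.mul_apply, reflV_self, map_neg,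
        inner_neg_right]
    have h2 := hx _ hp
    have h3 := hx _ (S.simple_subset ha)
    have h4 : ⟪x, a⟫ = 0 := by linarith
    have h5 : lp L x = x := by
      rw [hlp, LinearEquiv.mul_apply, reflV_fix h4] at hfix
      exact hfix
    rw [hlp]
    exact mul_mem (ih _ hlen L rfl hL' h5) (reflV_mem_weyl ⟨simple_mem_Phi ha, h4⟩)
  · obtain ⟨L', h1, h2, h3⟩ := exchange ha L hL' hp
    rw [hlp, h3]
    rw [hlp, h3] at hfix
    exact ih _ (h2.trans hlen) L' rfl h1 hfix

lemma weyl_finite (S : RootSys V) : (weyl (S.Φ : Set V) : Set (V ≃ₗ[ℝ] V)).Finite := by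
  let f : (weyl (S.Φ : Set V)) → ({a : V // a ∈ S.Φ} → {a : V // a ∈ S.Φ}) :=
    fun w α => ⟨w.1 α.1, weyl_Phi w.2 α.2⟩
  have hf : Function.Injective f := by
    intro w u h
    apply Subtype.ext
    apply LinearEquiv.toLinearMap_injective
    apply LinearMap.ext_on S.span_eq_top
    intro α ha
    have := congrFun h ⟨α, ha⟩
    exact congrArg Subtype.val this
  have : Finite (weyl (S.Φ : Set V)) := Finite.of_injective f hf
  exact Set.toFinite _

/-- Every weight can be moved to a dominant one. -/
lemma exists_dominant (S : RootSys V) {A : Set V} (hA : A ⊆ (S.Φ : Set V)) (l : HStar V) :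
    ∃ g ∈ weyl A, ∀ α ∈ A, α ∈ S.pos → 0 ≤ (wAct g l (coroot α)).re := by
  obtain ⟨δ, hδ⟩ := exists_delta S
  have hfin : (weyl A : Set (V ≃ₗ[ℝ] V)).Finite := (weyl_finite S).subset (weyl_mono hA)
  obtain ⟨g, hg, hmax⟩ := Set.exists_max_image _ (fun g => (wAct g l δ).re) hfin ⟨1, one_mem _⟩
  refine ⟨g, hg, fun α ha hp => ?_⟩
  have h := hmax (reflV α * g) (mul_mem (reflV_mem_weyl ha) hg)
  simp only [wAct_mul, ← sRefl_eq] at h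
  have h2 : (sRefl α (wAct g l) δ).re = (wAct g l δ).re - (wAct g l (coroot α)).re * ⟪α, δ⟫ := by
    simp [sRefl, emb]
  rw [h2] at h
  have := hδ α hp
  by_contra hneg
  push Not at hneg
  nlinarith

lemma weyl_conj {S : RootSys V} {A B : Set V} {g : V ≃ₗ[ℝ] V} (hg : g ∈ weyl (S.Φ : Set V))
    (h : ∀ α ∈ A, g⁻¹ α ∈ B) {w : V ≃ₗ[ℝ] V} (hw : w ∈ weyl A) : g⁻¹ * w * g ∈ weyl B := by
  induction hw using weyl_induction with
  | h1 => simp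
  | hm α ha w _ ih =>
    have : g⁻¹ * (reflV α * w) * g = (g⁻¹ * reflV α * g⁻¹⁻¹) * (g⁻¹ * w * g) := by group
    rw [this, ← reflV_conj (weyl_inner (inv_mem hg))]
    exact mul_mem (reflV_mem_weyl (h α ha)) ih

/-- The stabilizer of a vector is generated by reflections. -/
lemma stab_vec {S : RootSys V} {x : V} {w : V ≃ₗ[ℝ] V} (hw : w ∈ weyl (S.Φ : Set V))
    (hx : w x = x) : w ∈ weyl {α ∈ (S.Φ : Set V) | ⟪x, α⟫ = 0} := by
  obtain ⟨g, hg, hdom⟩ := exists_dominant S subset_rfl (emb x)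
  have hdom' : ∀ a ∈ S.pos, 0 ≤ ⟪g x, a⟫ := by
    intro a ha
    have h1 := hdom a (S.pos_subset ha) ha
    have h2 : (wAct g (emb x) (coroot a)).re = ⟪x, g⁻¹ (coroot a)⟫ := by
      simp [wAct_apply, emb]
    rw [h2, real_inner_comm, weyl_inv_inner hg, coroot, real_inner_smul_left,
      real_inner_comm (g x) a] at h1
    have h3 : 0 < ⟪a, a⟫ := real_inner_self_pos.2 (S.ne_zero a (S.pos_subset ha))
    have h4 : 0 < 2 / ⟪a, a⟫ := by positivity
    exact nonneg_of_mul_nonneg_right h1 h4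
  obtain ⟨L, hL, he⟩ := exists_list (mul_mem (mul_mem hg hw) (inv_mem hg))
  have hfix : lp L (g x) = g x := by
    rw [← he]
    simp [LinearEquiv.mul_apply, weyl_inv_apply, hx]
  have := stab_dominant_aux hdom' _ L rfl hL hfix
  rw [← he] at this
  have h := weyl_conj (B := {α ∈ (S.Φ : Set V) | ⟪x, α⟫ = 0}) hg (by
    rintro α ⟨h1, h2⟩
    refine ⟨weyl_Phi (inv_mem hg) h1, ?_⟩
    rw [real_inner_comm, weyl_inv_inner hg, real_inner_comm]
    exact h2) this
  have h' : g⁻¹ * (g * w * g⁻¹) * g = w := by group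
  rwa [h'] at h

/-- Every element of the Weyl group is a product of reflections in roots orthogonal to its
fixed space. -/
lemma stab_gen {S : RootSys V} {w : V ≃ₗ[ℝ] V} (hw : w ∈ weyl (S.Φ : Set V)) :
    w ∈ weyl {α ∈ (S.Φ : Set V) | ∀ x, w x = x → ⟪x, α⟫ = 0} := by
  let F : Submodule ℝ V := LinearMap.ker ((w : V →ₗ[ℝ] V) - LinearMap.id)
  have hF : ∀ x, x ∈ F ↔ w x = x := by
    intro x; simp [F, sub_eq_zero]
  let ι := {α : V // α ∈ S.Φ ∧ ∃ x ∈ F, ⟪x, α⟫ ≠ 0}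
  have : Finite ι := Finite.of_injective (fun a : ι => (⟨a.1, a.2.1⟩ : {a : V // a ∈ S.Φ}))
    (fun a b h => Subtype.ext (congrArg (fun z : {a : V // a ∈ S.Φ} => z.1) h))
  obtain ⟨x, hx, hx0⟩ := Module.Dual.exists_forall_mem_ne_zero_of_forall_exists F
    (fun a : ι => innerₗ V a.1) (by
      rintro ⟨a, ha, x, hx, h⟩
      exact ⟨x, hx, by simpa [real_inner_comm] using h⟩)
  refine weyl_mono ?_ (stab_vec hw ((hF x).1 hx))
  rintro α ⟨ha, hα⟩
  refine ⟨ha, fun y hy => ?_⟩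
  by_contra hne
  refine hx0 ⟨α, ha, y, (hF y).2 hy, hne⟩ ?_
  simpa [real_inner_comm] using hα

lemma mem_of_fix {w : V ≃ₗ[ℝ] V} {K : Submodule ℝ V} (h : ∀ x ∈ Kᗮ, w x = x) {α : V}
    (ha : ∀ x, w x = x → ⟪x, α⟫ = 0) : α ∈ K := by
  rw [← K.orthogonal_orthogonal, Submodule.mem_orthogonal]
  exact fun x hx => ha x (h x hx)

lemma exists_riesz (f : V →ₗ[ℝ] ℝ) : ∃ x : V, ∀ v, f v = ⟪x, v⟫ := by
  refine ⟨(InnerProductSpace.toDual ℝ V).symm (LinearMap.toContinuousLinearMap f), fun v => ?_⟩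
  rw [InnerProductSpace.toDual_symm_apply]
  rfl

/-- Real and imaginary parts of a weight. -/
lemma exists_re_im (l : HStar V) : ∃ x y : V, l = emb x + Complex.I • emb y := by
  obtain ⟨x, hx⟩ := exists_riesz (Complex.reLm ∘ₗ l)
  obtain ⟨y, hy⟩ := exists_riesz (Complex.imLm ∘ₗ l)
  refine ⟨x, y, ?_⟩
  ext v
  simp only [LinearMap.comp_apply, Complex.reLm_coe, Complex.imLm_coe] at hx hy
  rw [← Complex.re_add_im (l v), hx, hy]
  simp [emb, mul_comm]

lemma re_im_apply (x y v : V) : (emb x + Complex.I • emb y : HStar V) v = ⟨⟪x, v⟫, ⟪y, v⟫⟩ := by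
  apply Complex.ext <;> simp [emb]

lemma zero_of_fix {S : RootSys V} {w : V ≃ₗ[ℝ] V} (hw : w ∈ weyl (S.Φ : Set V)) {l : HStar V}
    (h : ∀ v, l (w v) = l v) {α : V} (ha : ∀ x, w x = x → ⟪x, α⟫ = 0) : l α = 0 := by
  obtain ⟨x, y, rfl⟩ := exists_re_im l
  simp only [re_im_apply, Complex.mk.injEq] at h
  have key : ∀ z : V, (∀ v, ⟪z, w v⟫ = ⟪z, v⟫) → ⟪z, α⟫ = 0 := by
    intro z hz
    apply ha
    have h2 : w⁻¹ z = z := by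
      apply ext_inner_right ℝ
      intro v
      rw [weyl_inv_inner hw, hz]
    conv_lhs => rw [← h2]
    exact weyl_apply_inv w z
  rw [re_im_apply, key x fun v => (h v).1, key y fun v => (h v).2]
  rfl

/-! ### Parity of the length -/

/-- The sign of a root. -/
def sg (S : RootSys V) (α : V) : ℤ := if α ∈ S.pos then 1 else -1

lemma sg_neg {S : RootSys V} {α : V} (h : α ∈ S.Φ) : sg S (-α) = - sg S α := by
  unfold sg
  by_cases h1 : α ∈ S.pos
  · simp [h1, S.not_both α h1]
  · simp [h1, neg_pos_of_not h h1]

lemma eps_eq (S : RootSys V) (w : V ≃ₗ[ℝ] V) :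
    (-1 : ℤ) ^ len S w = ∏ α ∈ S.pos, sg S (w α) := by
  unfold len sg
  rw [Finset.prod_ite]
  simp only [Finset.prod_const_one, one_mul, Finset.prod_const]
  congr 1
  rw [← Set.ncard_coe_finset]
  congr 1
  ext; simp

lemma eps_mul {S : RootSys V} {w u : V ≃ₗ[ℝ] V} (hw : w ∈ weyl (S.Φ : Set V))
    (hu : u ∈ weyl (S.Φ : Set V)) :
    (-1 : ℤ) ^ len S (w * u) = (-1) ^ len S w * (-1) ^ len S u := by
  have hsq : ∀ x, sg S x * sg S x = 1 := by
    intro x; unfold sg; split_ifs <;> norm_num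
  have key : ∏ α ∈ S.pos, sg S (u α) * sg S (w (u α)) = ∏ α ∈ S.pos, sg S α * sg S (w α) := by
    have hΦ : ∀ α ∈ S.pos, u α ∈ S.Φ := fun α ha => weyl_Phi hu (S.pos_subset ha)
    refine Finset.prod_bij (fun α _ => if u α ∈ S.pos then u α else - u α) ?_ ?_ ?_ ?_
    · intro α ha
      split_ifs with h
      · exact h
      · exact neg_pos_of_not (hΦ α ha) h
    · intro α ha γ hc h
      have : α = γ ∨ α = -γ := by
        split_ifs at h
        · exact Or.inl (u.injective h)
        · right; apply u.injective; rw [map_neg]; exact h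
        · right; apply u.injective; rw [map_neg, ← h, neg_neg]
        · exact Or.inl (u.injective (neg_injective h))
      rcases this with h1 | h1
      · exact h1
      · exact absurd (h1 ▸ ha) (S.not_both γ hc)
    · intro γ hc
      have hm : u⁻¹ γ ∈ S.Φ := weyl_Phi (inv_mem hu) (S.pos_subset hc)
      by_cases h : u⁻¹ γ ∈ S.pos
      · refine ⟨u⁻¹ γ, h, ?_⟩
        simp [hc]
      · refine ⟨-u⁻¹ γ, neg_pos_of_not hm h, ?_⟩
        simp [S.not_both γ hc]
    · intro α ha
      split_ifs with h
      · rfl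
      · rw [map_neg, sg_neg (hΦ α ha), sg_neg (weyl_Phi hw (hΦ α ha))]; ring
  rw [eps_eq, eps_eq, eps_eq]
  rw [Finset.prod_mul_distrib, Finset.prod_mul_distrib] at key
  have h1 : (∏ α ∈ S.pos, sg S α) = 1 := by
    apply Finset.prod_eq_one
    intro α ha; simp [sg, ha]
  have h2 : (∏ α ∈ S.pos, sg S (u α)) * ∏ α ∈ S.pos, sg S (u α) = 1 := by
    rw [← Finset.prod_mul_distrib]; exact Finset.prod_eq_one fun α _ => hsq _
  rw [h1, one_mul] at key
  simp only [LinearEquiv.mul_apply]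
  rw [← key]
  calc _ = (∏ α ∈ S.pos, sg S (w (u α))) *
      ((∏ α ∈ S.pos, sg S (u α)) * ∏ α ∈ S.pos, sg S (u α)) := by rw [h2, mul_one]
    _ = _ := by ring

/-! ### Parabolic subsystems -/

/-- The roots in a subspace. -/
def par (S : RootSys V) (K : Submodule ℝ V) : Set V := {α ∈ (S.Φ : Set V) | α ∈ K}

lemma par_subset (S : RootSys V) (K : Submodule ℝ V) : par S K ⊆ (S.Φ : Set V) := fun _ h => h.1

lemma par_refl {S : RootSys V} {K : Submodule ℝ V} :
    ∀ α ∈ par S K, ∀ β ∈ par S K, reflV α β ∈ par S K := by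
  intro α ha β hb
  refine ⟨S.refl_mem α ha.1 β hb.1, ?_⟩
  rw [reflV_apply]
  exact K.sub_mem hb.2 (K.smul_mem _ ha.2)

lemma weyl_par {S : RootSys V} {K : Submodule ℝ V} {w : V ≃ₗ[ℝ] V} (hw : w ∈ weyl (par S K))
    {α : V} (ha : α ∈ par S K) : w α ∈ par S K := weyl_maps par_refl hw ha

lemma weyl_par_le (S : RootSys V) (K : Submodule ℝ V) : weyl (par S K) ≤ weyl (S.Φ : Set V) :=
  weyl_mono (par_subset S K)

/-- An element of a parabolic subgroup fixing a regular weight is trivial. -/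
lemma eq_one_of_fix {S : RootSys V} {K : Submodule ℝ V} {w : V ≃ₗ[ℝ] V}
    (hw : w ∈ weyl (par S K)) {l : HStar V} (hl : IsRegularOn (par S K) l)
    (h : wAct w l = l) : w = 1 := by
  have hw' := weyl_par_le S K hw
  have h' : ∀ v, l (w v) = l v := by
    intro v
    have := LinearMap.congr_fun h (w v)
    rw [wAct_apply, weyl_inv_apply] at this
    exact this.symm
  have hg := stab_gen hw'
  have hfix : ∀ x ∈ Kᗮ, w x = x := by
    intro x hx
    refine weyl_fix (A := par S K) ?_ hw
    intro α ha
    exact Submodule.inner_left_of_mem_orthogonal ha.2 hx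
  have hempty : {α ∈ (S.Φ : Set V) | ∀ x, w x = x → ⟪x, α⟫ = 0} ⊆ (∅ : Set V) := by
    rintro α ⟨ha, hα⟩
    exact hl α ⟨ha, mem_of_fix hfix hα⟩ (zero_of_fix hw' h' hα)
  have := weyl_mono hempty hg
  simpa [weyl] using this

lemma regular_wAct {S : RootSys V} {K : Submodule ℝ V} {w : V ≃ₗ[ℝ] V}
    (hw : w ∈ weyl (par S K)) {l : HStar V} (hl : IsRegularOn (par S K) l) :
    IsRegularOn (par S K) (wAct w l) := by
  intro α ha
  exact hl _ (weyl_par (inv_mem hw) ha)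

lemma sgnW_eq {S : RootSys V} {K : Submodule ℝ V} {w : V ≃ₗ[ℝ] V}
    (hw : w ∈ weyl (par S K)) {l : HStar V} (hl : IsRegularOn (par S K) l) :
    sgnW S (par S K) l (wAct w l) = (-1) ^ len S w := by
  have h : IsRegularOn (par S K) l ∧ IsRegularOn (par S K) (wAct w l) ∧
      ∃ u, u ∈ weyl (par S K) ∧ wAct w l = wAct u l := ⟨hl, regular_wAct hw hl, w, hw, rfl⟩
  unfold sgnW
  rw [dif_pos h]
  have hs := h.2.2.choose_spec
  set u := h.2.2.choose
  have : u⁻¹ * w = 1 := by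
    apply eq_one_of_fix (mul_mem (inv_mem hs.1) hw) hl
    rw [wAct_mul, hs.2, wAct_inv_wAct]
  rw [inv_mul_eq_one.1 this]

lemma sgnW_ne {S : RootSys V} {A : Set V} {l m : HStar V} (h : sgnW S A l m ≠ 0) :
    IsRegularOn A l ∧ ∃ w, w ∈ weyl A ∧ m = wAct w l := by
  unfold sgnW at h
  split_ifs at h with h1
  · exact ⟨h1.1, h1.2.2⟩
  · exact absurd rfl h

lemma pow_neg_one_ne (n : ℕ) : (-1 : ℤ) ^ n ≠ 0 := pow_ne_zero _ (by norm_num)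

/-! ### Identification of the subsystems -/

lemma PhiI_eq (S : RootSys V) (I : Finset V) (hI : I ⊆ S.Δ) :
    PhiI S I = par S (Submodule.span ℝ (I : Set V)) := by
  have key : ∀ b ∈ S.pos, b ∈ Submodule.span ℝ (I : Set V) →
      (b ∈ S.Φ → b ∈ Submodule.span ℤ (I : Set V)) := by
    apply pos_induction S (I : Set V) (by exact_mod_cast hI)
    · exact fun a ha _ => Submodule.subset_span ha
    · intro a ha b hb _ h _
      obtain ⟨n, hn⟩ := S.crystallographic a (simple_mem_Phi (hI ha)) b (S.pos_subset hb)
      rw [reflV_apply, hn, Int.cast_smul_eq_zsmul]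
      exact Submodule.sub_mem _ (h (S.pos_subset hb))
        (Submodule.smul_mem _ _ (Submodule.subset_span ha))
  ext α
  constructor
  · rintro ⟨h1, h2⟩
    refine ⟨h1, ?_⟩
    exact Submodule.span_subset_span ℤ ℝ (I : Set V) h2
  · rintro ⟨h1, h2⟩
    refine ⟨h1, ?_⟩
    by_cases h : α ∈ S.pos
    · exact key α h h2 h1
    · have := key (-α) (neg_pos_of_not h1 h) (Submodule.neg_mem _ h2) (neg_mem S h1)
      simpa using Submodule.neg_mem _ this

lemma ratSpan_eq (S : RootSys V) (A : Set V) (hA : A ⊆ (S.Φ : Set V)) :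
    ratSpanRoots S A = par S (Submodule.span ℝ A) := by
  ext γ
  constructor
  · rintro ⟨h1, t, c, ht, rfl⟩
    exact ⟨h1, Submodule.sum_mem _ fun α ha => Submodule.smul_mem _ _
      (Submodule.subset_span (ht ha))⟩
  · rintro ⟨h1, h2⟩
    refine ⟨h1, ?_⟩
    obtain ⟨f, hf⟩ := LinearMap.exists_leftInverse_of_injective (Algebra.linearMap ℚ ℝ)
      (LinearMap.ker_eq_bot.2 (algebraMap ℚ ℝ).injective)
    have hf1 : f 1 = 1 := by
      have := LinearMap.congr_fun hf 1
      simpa using this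
    have hfi : ∀ (n : ℤ) (r : ℝ), f (r * n) = f r * n := by
      intro n r
      have : r * (n : ℝ) = n • r := by simp [mul_comm]
      rw [this, map_zsmul]; simp [mul_comm]
    obtain ⟨c, hcs, hc⟩ := Submodule.mem_span_set.1 h2
    refine ⟨c.support, fun α => f (c α), hcs, ?_⟩
    rw [← sub_eq_zero]
    set d := γ - ∑ α ∈ c.support, ((f (c α) : ℚ) : ℝ) • α with hd
    have hperp : ∀ b ∈ S.Φ, ⟪d, coroot b⟫ = 0 := by
      intro b hb
      have hn : ∀ α, ∃ n : ℤ, α ∈ S.Φ → ⟪α, coroot b⟫ = n := by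
        intro α
        by_cases h : α ∈ S.Φ
        · obtain ⟨n, hn⟩ := S.crystallographic b hb α h
          exact ⟨n, fun _ => hn⟩
        · exact ⟨0, fun h' => absurd h' h⟩
      choose n hn using hn
      have e1 : (n γ : ℝ) = ∑ α ∈ c.support, c α * n α := by
        rw [← hn γ h1, ← hc, Finsupp.sum, sum_inner]
        refine Finset.sum_congr rfl fun α ha => ?_
        rw [real_inner_smul_left, hn α (hA (hcs ha))]
      have e2 : (n γ : ℚ) = ∑ α ∈ c.support, f (c α) * n α := by
        have := congrArg f e1
        rw [map_sum] at this
        simp only [hfi] at this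
        rw [← this, ← one_mul (n γ : ℝ), hfi, hf1, one_mul]
      rw [hd, inner_sub_left, hn γ h1, sum_inner, sub_eq_zero]
      have e3 := congrArg (fun q : ℚ => (q : ℝ)) e2
      push_cast at e3
      rw [e3]
      refine Finset.sum_congr rfl fun α ha => ?_
      rw [real_inner_smul_left, hn α (hA (hcs ha))]
    have hall : ∀ v, ⟪d, v⟫ = 0 := by
      intro v
      have : (⊤ : Submodule ℝ V) ≤ LinearMap.ker (innerₗ V d) := by
        rw [← S.span_eq_top, Submodule.span_le]
        intro b hb
        have h3 := hperp b hb
        have h4 : 0 < ⟪b, b⟫ := real_inner_self_pos.2 (S.ne_zero b hb)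
        rw [coroot, real_inner_smul_right] at h3
        have h5 : 2 / ⟪b, b⟫ ≠ 0 := by positivity
        simpa [h5] using (mul_eq_zero.1 h3).resolve_left h5
      exact this (Submodule.mem_top (x := v))
    exact inner_self_eq_zero.1 (hall d)

/-- Integrality of `λ` on the coroots of `Φ_I`. -/
lemma lam_int {S : RootSys V} {I : Finset V} (hI : I ⊆ S.Δ) {l : HStar V}
    (hl : l ∈ LambdaP (I : Set V)) {α : V} (ha : α ∈ par S (Submodule.span ℝ (I : Set V))) :
    IsInt (l (coroot α)) := by
  have key : ∀ b ∈ S.pos, b ∈ Submodule.span ℝ (I : Set V) → IsInt (l (coroot b)) := by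
    apply pos_induction S (I : Set V) (by exact_mod_cast hI)
    · intro a ha
      obtain ⟨n, -, hn⟩ := hl a ha
      exact ⟨n, hn⟩
    · rintro a haI b hb - ⟨n, hn⟩
      obtain ⟨k, -, hk⟩ := hl a haI
      have haΦ := simple_mem_Phi (hI haI)
      obtain ⟨m, hm⟩ := S.crystallographic b (S.pos_subset hb) a haΦ
      refine ⟨n - m * k, ?_⟩
      rw [coroot_map (reflV_inner a)]
      have e : reflV a (coroot b) = coroot b - (m : ℝ) • coroot a := by
        rw [reflV_apply, ← hm, coroot, coroot, real_inner_smul_left, real_inner_smul_right,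
          real_inner_smul_right, smul_smul, real_inner_comm a b]
        congr 2
        ring
      rw [e, map_sub, map_smul, hn, hk]
      simp
  by_cases h : α ∈ S.pos
  · exact key α h ha.2
  · obtain ⟨n, hn⟩ := key (-α) (neg_pos_of_not ha.1 h) (Submodule.neg_mem _ ha.2)
    refine ⟨-n, ?_⟩
    rw [coroot_neg, map_neg] at hn
    rw [← neg_neg (l (coroot α)), hn]; simp

/-! ### Restriction of weights -/

lemma emb_add (x y : V) : emb (x + y) = emb x + emb y := by
  ext v; simp [emb, inner_add_left]

lemma emb_smul (c : ℝ) (x : V) : emb (c • x) = (c : ℂ) • emb x := by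
  ext v; simp [emb, real_inner_smul_left]

lemma emb_mem {A : Set V} {x : V} (hx : x ∈ Submodule.span ℝ A) :
    emb x ∈ Submodule.span ℂ (emb '' A) := by
  induction hx using Submodule.span_induction with
  | mem x h => exact Submodule.subset_span ⟨x, h, rfl⟩
  | zero =>
    have : emb (0 : V) = 0 := by ext v; simp [emb]
    rw [this]; exact Submodule.zero_mem _
  | add x y _ _ hx hy => rw [emb_add]; exact Submodule.add_mem _ hx hy
  | smul c x _ hx => rw [emb_smul]; exact Submodule.smul_mem _ _ hx

lemma restrict_spec {S : RootSys V} {U : Submodule ℝ V}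
    (hU : U ≤ Submodule.span ℝ (par S U)) (l : HStar V) :
    restrictW (par S U) l ∈ Submodule.span ℂ (emb '' par S U) ∧
    (∀ v ∈ U, restrictW (par S U) l v = l v) ∧ ∀ v ∈ Uᗮ, restrictW (par S U) l v = 0 := by
  have hex : ∃ m : HStar V, m ∈ Submodule.span ℂ (emb '' par S U) ∧
      ∀ α ∈ par S U, m (coroot α) = l (coroot α) := by
    obtain ⟨x, y, rfl⟩ := exists_re_im l
    obtain ⟨x1, hx1, x2, hx2, rfl⟩ := U.exists_add_mem_mem_orthogonal x
    obtain ⟨y1, hy1, y2, hy2, rfl⟩ := U.exists_add_mem_mem_orthogonal y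
    refine ⟨emb x1 + Complex.I • emb y1, ?_, ?_⟩
    · exact Submodule.add_mem _ (emb_mem (hU hx1)) (Submodule.smul_mem _ _ (emb_mem (hU hy1)))
    · intro α ha
      have hc : coroot α ∈ U := U.smul_mem _ ha.2
      rw [re_im_apply, re_im_apply, inner_add_left, inner_add_left,
        Submodule.inner_left_of_mem_orthogonal hc hx2,
        Submodule.inner_left_of_mem_orthogonal hc hy2, add_zero, add_zero]
  have hs : restrictW (par S U) l ∈ Submodule.span ℂ (emb '' par S U) ∧
      ∀ α ∈ par S U, restrictW (par S U) l (coroot α) = l (coroot α) :=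
    Classical.epsilon_spec hex
  refine ⟨hs.1, ?_, ?_⟩
  · intro v hv
    have hle : Submodule.span ℝ (par S U) ≤ LinearMap.eqLocus (restrictW (par S U) l) l := by
      rw [Submodule.span_le]
      intro α ha
      have h := hs.2 α ha
      have h4 : 0 < ⟪α, α⟫ := real_inner_self_pos.2 (S.ne_zero α ha.1)
      have h5 : 2 / ⟪α, α⟫ ≠ 0 := by positivity
      rw [coroot, map_smul, map_smul] at h
      exact smul_right_injective ℂ h5 h
    exact hle (hU hv)
  · intro v hv
    have : ∀ m ∈ Submodule.span ℂ (emb '' par S U), m v = 0 := by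
      intro m hm
      induction hm using Submodule.span_induction with
      | mem m h =>
        obtain ⟨α, ha, rfl⟩ := h
        have : ⟪α, v⟫ = 0 := Submodule.inner_right_of_mem_orthogonal ha.2 hv
        simp [emb, this]
      | zero => rfl
      | add x y _ _ hx hy => rw [LinearMap.add_apply, hx, hy, add_zero]
      | smul c x _ hx => rw [LinearMap.smul_apply, hx, smul_zero]
    exact this _ hs.1

lemma weyl_par_mem {S : RootSys V} {U : Submodule ℝ V} {w : V ≃ₗ[ℝ] V}
    (hw : w ∈ weyl (par S U)) {v : V} (hv : v ∈ U) : w v ∈ U := by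
  have := weyl_sub_mem U (fun α ha => ha.2) hw v
  have h := U.add_mem this hv
  rwa [sub_add_cancel] at h

lemma weyl_par_fix {S : RootSys V} {U : Submodule ℝ V} {w : V ≃ₗ[ℝ] V}
    (hw : w ∈ weyl (par S U)) {v : V} (hv : v ∈ Uᗮ) : w v = v :=
  weyl_fix (fun _ ha => Submodule.inner_left_of_mem_orthogonal ha.2 hv) hw

lemma agree_iff {S : RootSys V} {U : Submodule ℝ V} {l l' : HStar V}
    (hl : ∀ v ∈ U, l' v = l v) {a b : V ≃ₗ[ℝ] V} (ha : a ∈ weyl (par S U))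
    (hb : b ∈ weyl (par S U)) : wAct a l' = wAct b l' ↔ wAct a l = wAct b l := by
  have key : ∀ m : HStar V, wAct a m = wAct b m ↔ ∀ v ∈ U, m (a⁻¹ v) = m (b⁻¹ v) := by
    intro m
    constructor
    · intro h v _; exact LinearMap.congr_fun h v
    · intro h
      ext v
      obtain ⟨x, hx, y, hy, rfl⟩ := U.exists_add_mem_mem_orthogonal v
      rw [map_add, map_add]
      simp only [wAct_apply]
      rw [h x hx, weyl_par_fix (inv_mem ha) hy, weyl_par_fix (inv_mem hb) hy]
  rw [key, key]
  refine forall₂_congr fun v hv => ?_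
  rw [hl _ (weyl_par_mem (inv_mem ha) hv), hl _ (weyl_par_mem (inv_mem hb) hv)]

/-- The key lemma: reflections linked to `s_β λ` through `W_I` live in `Φ_{β,2}`. -/
lemma key_lemma {S : RootSys V} {K U : Submodule ℝ V} {l : HStar V} {β γ : V}
    (hβ : β ∈ par S U) (hsing : singSet S l ⊆ U) (hγ : γ ∈ S.Φ) (hγK : γ ∉ K)
    {u : V ≃ₗ[ℝ] V} (hu : u ∈ weyl (par S K)) (h : sRefl γ l = wAct u (sRefl β l)) :
    γ ∈ U ∧ u ∈ weyl (par S (K ⊓ U)) := by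
  have hu' := weyl_par_le S K hu
  set v := reflV γ * u * reflV β with hv
  have hvW : v ∈ weyl (S.Φ : Set V) :=
    mul_mem (mul_mem (reflV_mem_weyl hγ) hu') (reflV_mem_weyl hβ.1)
  have hvl : wAct v l = l := by
    rw [hv, mul_assoc, wAct_mul, wAct_mul, ← sRefl_eq β, ← h, sRefl_eq, ← wAct_mul,
      reflV_mul_self, wAct_one]
  have hvl' : ∀ x, l (v x) = l x := by
    intro x
    have := LinearMap.congr_fun hvl (v x)
    rw [wAct_apply, weyl_inv_apply] at this
    exact this.symm
  have hvU : v ∈ weyl (par S U) := by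
    refine weyl_mono ?_ (stab_gen hvW)
    rintro α ⟨ha, hα⟩
    exact ⟨ha, hsing ⟨ha, zero_of_fix hvW hvl' hα⟩⟩
  have hueq : u = reflV γ * (v * reflV β) := by
    rw [hv]
    calc u = (reflV γ * reflV γ) * u * (reflV β * reflV β) := by
          rw [reflV_mul_self, reflV_mul_self, one_mul, mul_one]
      _ = _ := by group
  have hfix : ∀ x ∈ Uᗮ, u x = reflV γ x := by
    intro x hx
    rw [hueq, LinearEquiv.mul_apply, weyl_par_fix (mul_mem hvU (reflV_mem_weyl hβ)) hx]
  have hγU : γ ∈ U := by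
    rw [← U.orthogonal_orthogonal, Submodule.mem_orthogonal]
    intro x hx
    by_contra hne
    apply hγK
    have h1 := weyl_sub_mem K (fun α ha => ha.2) hu x
    rw [hfix x hx, reflV_apply, sub_sub_cancel_left] at h1
    have h2 : ⟪x, coroot γ⟫ ≠ 0 := by
      have h4 : 0 < ⟪γ, γ⟫ := real_inner_self_pos.2 (S.ne_zero γ hγ)
      have h5 : 2 / ⟪γ, γ⟫ ≠ 0 := by positivity
      rw [coroot, real_inner_smul_right]
      exact mul_ne_zero h5 hne
    have h3 := K.neg_mem h1
    rw [neg_neg] at h3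
    exact (K.smul_mem_iff h2).1 h3
  refine ⟨hγU, weyl_mono ?_ (stab_gen hu')⟩
  rintro α ⟨ha, hα⟩
  refine ⟨ha, mem_of_fix (fun x hx => weyl_par_fix hu hx) hα, mem_of_fix (fun x hx => ?_) hα⟩
  rw [hfix x hx, reflV_fix]
  exact Submodule.inner_left_of_mem_orthogonal hγU hx

lemma wAct_coroot {S : RootSys V} {A : Set V} (hA : A ⊆ (S.Φ : Set V)) {g : V ≃ₗ[ℝ] V}
    (hg : g ∈ weyl A) (l : HStar V) (α : V) : wAct g l (coroot α) = l (coroot (g⁻¹ α)) := by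
  rw [wAct_apply, coroot_map (weyl_inner (inv_mem (weyl_mono hA hg)))]

/-- Existence of a dominant regular conjugate. -/
lemma exists_posInt {S : RootSys V} {K : Submodule ℝ V} {l : HStar V}
    (hIntg : ∀ α ∈ par S K, IsInt (l (coroot α))) (hreg : IsRegularOn (par S K) l) :
    ∃ g ∈ weyl (par S K), ∀ α ∈ par S K ∩ (S.pos : Set V), IsPosInt (wAct g l (coroot α)) := by
  obtain ⟨g, hg, hdom⟩ := exists_dominant S (par_subset S K) l
  refine ⟨g, hg, ?_⟩
  rintro α ⟨ha, hp⟩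
  have h1 := hdom α ha hp
  have hga := weyl_par (inv_mem hg) ha
  rw [wAct_coroot (par_subset S K) hg] at h1 ⊢
  obtain ⟨n, hn⟩ := hIntg _ hga
  refine ⟨n, ?_, hn⟩
  rw [hn] at h1
  have h2 : (0 : ℝ) ≤ n := by simpa using h1
  have h3 : 0 ≤ n := by exact_mod_cast h2
  rcases h3.lt_or_eq with h | h
  · exact h
  · exfalso
    rw [← h] at hn
    apply hreg _ hga
    have h4 : 0 < ⟪g⁻¹ α, g⁻¹ α⟫ := real_inner_self_pos.2 (S.ne_zero _ hga.1)
    have h5 : 2 / ⟪g⁻¹ α, g⁻¹ α⟫ ≠ 0 := by positivity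
    rw [coroot, map_smul, Int.cast_zero] at hn
    exact (smul_eq_zero.1 hn).resolve_left h5

lemma wAct_span {S : RootSys V} {U : Submodule ℝ V} {g : V ≃ₗ[ℝ] V} (hg : g ∈ weyl (par S U))
    {l : HStar V} (hl : l ∈ Submodule.span ℂ (emb '' par S U)) :
    wAct g l ∈ Submodule.span ℂ (emb '' par S U) := by
  induction hg using weyl_induction with
  | h1 => rwa [wAct_one]
  | hm α ha w _ ih =>
    rw [wAct_mul, ← sRefl_eq, sRefl]
    exact Submodule.sub_mem _ ih (Submodule.smul_mem _ _ (Submodule.subset_span ⟨α, ha, rfl⟩))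

lemma main_lemma (S : RootSys V) (I : Finset V) (hI : I ⊆ S.Δ)
    (lam : HStar V) (hlam : lam ∈ LambdaP (I : Set V)) (β : V) (K U : Submodule ℝ V)
    (hK : K = Submodule.span ℝ (I : Set V)) (hU : U ≤ Submodule.span ℝ (par S U))
    (hsing : singSet S lam ⊆ U) (hβU : β ∈ U)
    (hβ : β ∈ PsiP S (par S K) (S.Φ : Set V) lam) :
    ((∃ mu ∈ LambdaP (I : Set V), sgnW S (par S K) (sRefl β lam) mu ≠ 0) ↔
      (∃ mu' ∈ LambdaPSub S (par S (K ⊓ U)) (par S U),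
        sgnW S (par S (K ⊓ U)) (sRefl β (restrictW (par S U) lam)) mu' ≠ 0)) ∧
    (∀ mu ∈ LambdaP (I : Set V), sgnW S (par S K) (sRefl β lam) mu ≠ 0 →
      ∀ w : V ≃ₗ[ℝ] V, w ∈ weyl (par S K) → mu = wAct w (sRefl β lam) →
      ∀ mu' ∈ LambdaPSub S (par S (K ⊓ U)) (par S U),
      ∀ w' : V ≃ₗ[ℝ] V, w' ∈ weyl (par S (K ⊓ U)) →
        mu' = wAct w' (sRefl β (restrictW (par S U) lam)) →
        jc S (par S K) (S.Φ : Set V) lam mu =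
          (-1 : ℤ) ^ (len S w + len S w') *
            jc S (par S (K ⊓ U)) (par S U) (restrictW (par S U) lam) mu') := by
  obtain ⟨hspan, hagree, hperp⟩ := restrict_spec hU lam
  set lam' := restrictW (par S U) lam with hlam'
  obtain ⟨⟨hβΦ, hβpos⟩, hβK, hβint⟩ := hβ
  have hβ2 : β ∈ par S U := ⟨hβΦ, hβU⟩
  have hKU : par S (K ⊓ U) ⊆ par S K := fun α h => ⟨h.1, h.2.1⟩
  have hKU' : par S (K ⊓ U) ⊆ par S U := fun α h => ⟨h.1, h.2.2⟩
  -- `s_γ λ` and `s_γ λ'` agree on `U`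
  have hs : ∀ γ ∈ U, ∀ v ∈ U, sRefl γ lam' v = sRefl γ lam v := by
    intro γ hγ v hv
    rw [sRefl_apply, sRefl_apply]
    apply hagree
    rw [reflV_apply]
    exact U.sub_mem hv (U.smul_mem _ hγ)
  have hregiff : IsRegularOn (par S K) (sRefl β lam) ↔
      IsRegularOn (par S (K ⊓ U)) (sRefl β lam') := by
    constructor
    · intro h α ha
      rw [hs β hβU α ha.2.2]
      exact h α (hKU ha)
    · intro h α ha h0
      have h0' := h0
      rw [sRefl_apply] at h0'
      have hm : reflV β α ∈ U := hsing ⟨S.refl_mem β hβΦ α ha.1, h0'⟩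
      have hαU : α ∈ U := by
        rw [← reflV_involutive β α, reflV_apply β (reflV β α)]
        exact U.sub_mem hm (U.smul_mem _ hβU)
      refine h α ⟨ha.1, ha.2, hαU⟩ ?_
      rw [hs β hβU α hαU, h0]
  have hIntg : ∀ α ∈ par S K, IsInt (sRefl β lam (coroot α)) := by
    intro α ha
    obtain ⟨n, hn⟩ := lam_int hI hlam (hK ▸ ha)
    obtain ⟨m, -, hm⟩ := hβint
    obtain ⟨k, hk⟩ := S.crystallographic α ha.1 β hβΦ
    refine ⟨n - m * k, ?_⟩
    simp [sRefl, emb, hn, hm, hk]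
  have hIntg' : ∀ α ∈ par S (K ⊓ U), IsInt (sRefl β lam' (coroot α)) := by
    intro α ha
    rw [hs β hβU (coroot α) (U.smul_mem _ ha.2.2)]
    exact hIntg α (hKU ha)
  refine ⟨⟨?_, ?_⟩, ?_⟩
  · rintro ⟨mu, -, hmu⟩
    have hreg := hregiff.1 (sgnW_ne hmu).1
    obtain ⟨g, hg, hpos⟩ := exists_posInt hIntg' hreg
    refine ⟨wAct g (sRefl β lam'), ⟨?_, hpos⟩, ?_⟩
    · apply wAct_span (weyl_mono hKU' hg)
      rw [sRefl_eq]
      exact wAct_span (reflV_mem_weyl hβ2) hspan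
    · rw [sgnW_eq hg hreg]; exact pow_neg_one_ne _
  · rintro ⟨mu, -, hmu⟩
    have hreg := hregiff.2 (sgnW_ne hmu).1
    obtain ⟨g, hg, hpos⟩ := exists_posInt hIntg hreg
    refine ⟨wAct g (sRefl β lam), ?_, ?_⟩
    · intro α ha
      refine hpos α ⟨⟨simple_mem_Phi (hI ha), ?_⟩, S.simple_subset (hI ha)⟩
      rw [hK]; exact Submodule.subset_span ha
    · rw [sgnW_eq hg hreg]; exact pow_neg_one_ne _
  · intro mu _ hmu w hw hmuw mu' _ w' hw' hmuw'
    have hreg := (sgnW_ne hmu).1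
    have hreg' := hregiff.1 hreg
    unfold jc
    rw [mul_finsum_mem, finsum_mem_def, finsum_mem_def]
    refine finsum_congr fun γ => ?_
    -- the two values when `s_γ λ = u s_β λ`
    have hval : ∀ u ∈ weyl (par S (K ⊓ U)), sRefl γ lam = wAct u (sRefl β lam) →
        sRefl γ lam' = wAct u (sRefl β lam') →
        sgnW S (par S K) (sRefl γ lam) mu = (-1 : ℤ) ^ (len S w + len S w') *
          sgnW S (par S (K ⊓ U)) (sRefl γ lam') mu' := by
      intro u hu h1 h2
      have huK := weyl_mono hKU hu
      have e1 : mu = wAct (w * u⁻¹) (sRefl γ lam) := by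
        rw [h1, ← wAct_mul, hmuw]; congr 1; group
      have e2 : mu' = wAct (w' * u⁻¹) (sRefl γ lam') := by
        rw [h2, ← wAct_mul, hmuw']; congr 1; group
      have r1 : IsRegularOn (par S K) (sRefl γ lam) := by rw [h1]; exact regular_wAct huK hreg
      have r2 : IsRegularOn (par S (K ⊓ U)) (sRefl γ lam') := by
        rw [h2]; exact regular_wAct hu hreg'
      rw [e1, e2, sgnW_eq (mul_mem hw (inv_mem huK)) r1, sgnW_eq (mul_mem hw' (inv_mem hu)) r2]
      have huΦ := weyl_par_le S _ hu
      rw [eps_mul (weyl_par_le S _ hw) (inv_mem huΦ), eps_mul (weyl_par_le S _ hw') (inv_mem huΦ),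
        pow_add]
      have hsq : (-1 : ℤ) ^ len S w' * (-1 : ℤ) ^ len S w' = 1 := by
        rw [← mul_pow]; simp
      calc _ = (-1 : ℤ) ^ len S w * ((-1 : ℤ) ^ len S w' * (-1 : ℤ) ^ len S w') *
            (-1) ^ len S u⁻¹ := by rw [hsq]; ring
        _ = _ := by ring
    have htrans : γ ∈ par S U → ∀ u ∈ weyl (par S (K ⊓ U)),
        (sRefl γ lam' = wAct u (sRefl β lam') ↔ sRefl γ lam = wAct u (sRefl β lam)) := by
      intro hγ u hu
      simp only [sRefl_eq, ← wAct_mul]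
      exact agree_iff hagree (reflV_mem_weyl hγ)
        (mul_mem (weyl_mono hKU' hu) (reflV_mem_weyl hβ2))
    -- membership in the two index sets
    have hmem : γ ∈ par S U → ∀ u ∈ weyl (par S (K ⊓ U)), sRefl γ lam = wAct u (sRefl β lam) →
        (γ ∈ PsiPP S (par S K) (S.Φ : Set V) lam ↔
          γ ∈ PsiPP S (par S (K ⊓ U)) (par S U) lam') := by
      intro hγ u hu h1
      have h2 := (htrans hγ u hu).2 h1
      have r1 : IsRegularOn (par S K) (sRefl γ lam) := by
        rw [h1]; exact regular_wAct (weyl_mono hKU hu) hreg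
      have r2 : IsRegularOn (par S (K ⊓ U)) (sRefl γ lam') := by
        rw [h2]; exact regular_wAct hu hreg'
      have hc : lam' (coroot γ) = lam (coroot γ) := hagree _ (U.smul_mem _ hγ.2)
      constructor
      · rintro ⟨⟨⟨-, h3⟩, h4, h5⟩, -⟩
        exact ⟨⟨⟨hγ, h3⟩, fun h => h4 (hKU h), hc ▸ h5⟩, r2⟩
      · rintro ⟨⟨⟨-, h3⟩, h4, h5⟩, -⟩
        exact ⟨⟨⟨hγ.1, h3⟩, fun h => h4 ⟨h.1, h.2, hγ.2⟩, hc ▸ h5⟩, r1⟩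
    by_cases hcase : γ ∈ par S U ∧ ∃ u ∈ weyl (par S (K ⊓ U)),
        sRefl γ lam = wAct u (sRefl β lam)
    · obtain ⟨hγ, u, hu, h1⟩ := hcase
      have hm := hmem hγ u hu h1
      by_cases hγA : γ ∈ PsiPP S (par S K) (S.Φ : Set V) lam
      · rw [Set.indicator_of_mem hγA, Set.indicator_of_mem (hm.1 hγA)]
        exact hval u hu h1 ((htrans hγ u hu).2 h1)
      · rw [Set.indicator_of_notMem hγA, Set.indicator_of_notMem (fun h => hγA (hm.2 h))]
    · -- both sides vanish
      have hz1 : Set.indicator (PsiPP S (par S K) (S.Φ : Set V) lam)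
          (fun γ => sgnW S (par S K) (sRefl γ lam) mu) γ = 0 := by
        by_contra hne
        obtain ⟨hγA, hne⟩ := Set.indicator_apply_ne_zero.1 hne
        obtain ⟨-, u0, hu0, he⟩ := sgnW_ne hne
        obtain ⟨⟨⟨hγΦ, -⟩, hγK, -⟩, -⟩ := hγA
        have h1 : sRefl γ lam = wAct (u0⁻¹ * w) (sRefl β lam) := by
          rw [wAct_mul, ← hmuw, he, wAct_inv_wAct]
        have := key_lemma hβ2 hsing hγΦ (fun h => hγK ⟨hγΦ, h⟩) (mul_mem (inv_mem hu0) hw) h1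
        exact hcase ⟨⟨hγΦ, this.1⟩, _, this.2, h1⟩
      have hz2 : Set.indicator (PsiPP S (par S (K ⊓ U)) (par S U) lam')
          (fun γ => (-1 : ℤ) ^ (len S w + len S w') *
            sgnW S (par S (K ⊓ U)) (sRefl γ lam') mu') γ = 0 := by
        by_contra hne
        obtain ⟨hγA, hne⟩ := Set.indicator_apply_ne_zero.1 hne
        obtain ⟨-, u0, hu0, he⟩ := sgnW_ne (right_ne_zero_of_mul hne)
        have hγ : γ ∈ par S U := hγA.1.1.1
        have h1 : sRefl γ lam' = wAct (u0⁻¹ * w') (sRefl β lam') := by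
          rw [wAct_mul, ← hmuw', he, wAct_inv_wAct]
        have hu := mul_mem (inv_mem hu0) hw'
        exact hcase ⟨hγ, _, hu, (htrans hγ _ hu).1 h1⟩
      rw [hz1, hz2]

/-- Lemma 4.9 (Singular invariance): for `λ ∈ Λ_I⁺`, `β ∈ Ψ_λ⁺` and
`λ' = λ|_{Φ_{β,2}}`, there is `μ ∈ Λ_I⁺` with `sgn(s_β λ, μ) ≠ 0` iff there is
`μ' ∈ Λ⁺(Φ_I ∩ Φ_{β,2}, Φ_{β,2})` with
`sgn(s_β λ', μ', Φ_I ∩ Φ_{β,2}, Φ_{β,2}) ≠ 0`; and if `sgn(s_β λ, μ) ≠ 0` then,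
writing `μ = w s_β λ` with `w ∈ W_I` and `μ' = w' s_β λ'` with
`w' ∈ W(Φ_I ∩ Φ_{β,2})`, one has
`c(λ, μ) = (-1)^{ℓ(w)+ℓ(w')} c(λ', μ', Φ_I ∩ Φ_{β,2}, Φ_{β,2})`. -/
theorem statement_8 {V : Type*} [NormedAddCommGroup V] [InnerProductSpace ℝ V]
    [FiniteDimensional ℝ V]
    (S : RootSys V) (I : Finset V) (hI : I ⊆ S.Δ)
    (lam : HStar V) (hlam : lam ∈ LambdaP (I : Set V))
    (β : V) (hβ : β ∈ PsiP S (PhiI S I) (S.Φ : Set V) lam) :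
    ((∃ mu ∈ LambdaP (I : Set V), sgnW S (PhiI S I) (sRefl β lam) mu ≠ 0) ↔
      (∃ mu' ∈ LambdaPSub S (PhiI S I ∩ ratSpanRoots S (singSet S lam ∪ {β}))
          (ratSpanRoots S (singSet S lam ∪ {β})),
        sgnW S (PhiI S I ∩ ratSpanRoots S (singSet S lam ∪ {β}))
          (sRefl β (restrictW (ratSpanRoots S (singSet S lam ∪ {β})) lam)) mu' ≠ 0)) ∧
    (∀ mu ∈ LambdaP (I : Set V), sgnW S (PhiI S I) (sRefl β lam) mu ≠ 0 →
      ∀ w : V ≃ₗ[ℝ] V, w ∈ weyl (PhiI S I) → mu = wAct w (sRefl β lam) →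
      ∀ mu' ∈ LambdaPSub S (PhiI S I ∩ ratSpanRoots S (singSet S lam ∪ {β}))
          (ratSpanRoots S (singSet S lam ∪ {β})),
      ∀ w' : V ≃ₗ[ℝ] V, w' ∈ weyl (PhiI S I ∩ ratSpanRoots S (singSet S lam ∪ {β})) →
        mu' = wAct w' (sRefl β (restrictW (ratSpanRoots S (singSet S lam ∪ {β})) lam)) →
        jc S (PhiI S I) (S.Φ : Set V) lam mu =
          (-1 : ℤ) ^ (len S w + len S w') *
            jc S (PhiI S I ∩ ratSpanRoots S (singSet S lam ∪ {β}))
              (ratSpanRoots S (singSet S lam ∪ {β}))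
              (restrictW (ratSpanRoots S (singSet S lam ∪ {β})) lam) mu') := by
  have hsub : singSet S lam ∪ {β} ⊆ (S.Φ : Set V) := by
    rintro α (h | h)
    · exact h.1
    · rw [Set.mem_singleton_iff.1 h]; exact hβ.1.1
  have e1 := PhiI_eq S I hI
  have e2 := ratSpan_eq S _ hsub
  set U := Submodule.span ℝ (singSet S lam ∪ {β}) with hUdef
  have e3 : par S (Submodule.span ℝ (I : Set V)) ∩ par S U =
      par S (Submodule.span ℝ (I : Set V) ⊓ U) := by
    ext α
    constructor
    · rintro ⟨h1, h2⟩; exact ⟨h1.1, h1.2, h2.2⟩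
    · rintro ⟨h1, h2, h3⟩; exact ⟨⟨h1, h2⟩, ⟨h1, h3⟩⟩
  have hA : singSet S lam ∪ {β} ⊆ (U : Set V) := Submodule.subset_span
  rw [e1] at hβ
  rw [e1, e2, e3]
  refine main_lemma S I hI lam hlam β _ U rfl ?_ (fun α h => hA (Or.inl h)) (hA (Or.inr rfl)) hβ
  exact Submodule.span_mono fun α h => ⟨hsub h, hA h⟩

end JantzenGVM
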